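/- arXiv:2510.19355 — 2 statements merged into one kernel-verified Lean document; each statement's English description precedes it below -/
import Mathlib

section
/- Let p be a prime number, d ∈ ℕ, M ∈ ℕ with M ≥ 1, and e : ℕ → ℚ a sequence. The following are equivalent: (a) there exist functions a_0,…,a_d : ℕ → ℚ, each periodic with period M (i.e., a_j(n+M) = a_j(n) for all n), such that e_n = a_d(n) p^{dn} + a_{d−1}(n) p^{(d−1)n} + ⋯ + a_0(n) for every n ∈ ℕ; (b) there exists a polynomial P ∈ ℚ[z] with deg P < M(d+1) such that Q·G(e;z) = P in ℚ⟦z⟧, where Q = ∏_{j=0}^d (z^M − 1/p^{jM}) and G(e;z) = ∑_{n≥0} e_n z^n. -/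
open Polynomial in
/-- The factor `z^M - 1/p^{jM}`. -/
noncomputable def qF (p M j : ℕ) : ℚ[X] := X ^ M - C ((1 : ℚ) / (p : ℚ) ^ (j * M))

open Polynomial in
lemma qF_monic (p M j : ℕ) (hM : 1 ≤ M) : (qF p M j).Monic :=
  monic_X_pow_sub_C _ (by omega)

open Polynomial in
lemma qF_degree (p M j : ℕ) (hM : 1 ≤ M) : (qF p M j).degree = (M : ℕ) :=
  degree_X_pow_sub_C (by omega) _

open Polynomial in
lemma qF_prod_degree (p M k : ℕ) (hM : 1 ≤ M) :
    (∏ j ∈ Finset.range k, qF p M j).degree = (M * k : ℕ) := by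
  rw [degree_prod, Finset.sum_congr rfl (fun j _ => qF_degree p M j hM)]
  simp [mul_comm]

open Polynomial in
lemma qF_coprime (p M : ℕ) (hp : p.Prime) (hM : 1 ≤ M) {i j : ℕ} (hij : i ≠ j) :
    IsCoprime (qF p M i) (qF p M j) := by
  have hne : (1 : ℚ) / (p : ℚ) ^ (j * M) - 1 / (p : ℚ) ^ (i * M) ≠ 0 := by
    intro h
    have h2 : (p : ℚ) ^ (j * M) = (p : ℚ) ^ (i * M) := by
      have h1 := sub_eq_zero.mp h
      simpa using h1
    have h3 : p ^ (j * M) = p ^ (i * M) := by exact_mod_cast h2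
    have h4 := Nat.pow_right_injective hp.two_le h3
    exact hij (Nat.eq_of_mul_eq_mul_right (by omega) h4).symm
  set c := (1 : ℚ) / (p : ℚ) ^ (j * M) - 1 / (p : ℚ) ^ (i * M) with hc
  refine ⟨C c⁻¹, - C c⁻¹, ?_⟩
  have : C c⁻¹ * qF p M i + -C c⁻¹ * qF p M j = C c⁻¹ * C c := by
    rw [hc, C_sub]; unfold qF; ring
  rw [this, ← C_mul, inv_mul_cancel₀ hne, C_1]

open Polynomial in
lemma coeff_qF_mul (p M j : ℕ) (f : ℕ → ℚ) (n : ℕ) :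
    PowerSeries.coeff (n + M) ((qF p M j : PowerSeries ℚ) * PowerSeries.mk f) =
      f n - 1 / (p : ℚ) ^ (j * M) * f (n + M) := by
  unfold qF
  rw [Polynomial.coe_sub, Polynomial.coe_pow, Polynomial.coe_X, Polynomial.coe_C, sub_mul,
    map_sub, PowerSeries.coeff_X_pow_mul, PowerSeries.coeff_C_mul]
  simp

/-- Single-factor version. -/
lemma single_iff (p : ℕ) (hp : p.Prime) (M : ℕ) (hM : 1 ≤ M) (k : ℕ) (f : ℕ → ℚ) :
    (∃ a : ℕ → ℚ, (∀ n, a (n + M) = a n) ∧ ∀ n, f n = a n * (p : ℚ) ^ (k * n)) ↔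
    ∃ P : Polynomial ℚ, P.degree < (M : ℕ) ∧
      (qF p M k : PowerSeries ℚ) * PowerSeries.mk f = (P : PowerSeries ℚ) := by
  have hp0 : (p : ℚ) ≠ 0 := by exact_mod_cast hp.ne_zero
  constructor
  · rintro ⟨a, ha, hf⟩
    refine ⟨PowerSeries.trunc M ((qF p M k : PowerSeries ℚ) * PowerSeries.mk f),
      PowerSeries.degree_trunc_lt _ _, ?_⟩
    ext n
    rw [Polynomial.coeff_coe, PowerSeries.coeff_trunc]
    split_ifs with h
    · rfl
    · obtain ⟨m, rfl⟩ : ∃ m, n = m + M := ⟨n - M, by omega⟩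
      rw [coeff_qF_mul, hf, hf, ha, mul_add, pow_add]
      field_simp
      ring
  · rintro ⟨P, hP, h⟩
    refine ⟨fun n => f n / (p : ℚ) ^ (k * n), fun n => ?_, fun n => ?_⟩
    · have h1 := coeff_qF_mul p M k f n
      rw [h, Polynomial.coeff_coe, Polynomial.coeff_eq_zero_of_degree_lt
        (hP.trans_le (by exact_mod_cast Nat.le_add_left M n))] at h1
      have h2 : f n = 1 / (p : ℚ) ^ (k * M) * f (n + M) := by linarith
      simp only [h2, mul_add, pow_add]
      field_simp
    · field_simp

lemma main_aux (p : ℕ) (hp : p.Prime) (M : ℕ) (hM : 1 ≤ M) (k : ℕ) : ∀ e : ℕ → ℚ,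
    (∃ a : ℕ → ℕ → ℚ, (∀ j, ∀ n : ℕ, a j (n + M) = a j n) ∧
      ∀ n : ℕ, e n = ∑ j ∈ Finset.range k, a j n * (p : ℚ) ^ (j * n)) ↔
    (∃ P : Polynomial ℚ, P.degree < (M * k : ℕ) ∧
      ((∏ j ∈ Finset.range k, qF p M j : Polynomial ℚ) : PowerSeries ℚ) * PowerSeries.mk e
        = (P : PowerSeries ℚ)) := by
  induction k with
  | zero =>
    intro e
    constructor
    · rintro ⟨a, -, h⟩
      refine ⟨0, by simp, ?_⟩
      ext n
      simp [h]
    · rintro ⟨P, hP, h⟩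
      have hP0 : P = 0 := by
        by_contra h0
        have h1 := Polynomial.zero_le_degree_iff.mpr h0
        exact absurd (h1.trans_lt hP) (by simp)
      refine ⟨fun _ _ => 0, by simp, fun n => ?_⟩
      have := congrArg (PowerSeries.coeff n) h
      simpa [hP0] using this
  | succ k ih =>
    intro e
    have hQ := qF_prod_degree p M k hM
    have hF := qF_degree p M k hM
    have hFm := qF_monic p M k hM
    have hcast : ((M * (k + 1) : ℕ) : WithBot ℕ) = ((M * k : ℕ) : WithBot ℕ) + (M : ℕ) := by
      rw [mul_add, mul_one, Nat.cast_add]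
    have hcop : IsCoprime (∏ j ∈ Finset.range k, qF p M j) (qF p M k) :=
      IsCoprime.prod_left fun j hj => qF_coprime p M hp hM (Finset.mem_range.mp hj).ne
    rw [Finset.prod_range_succ]
    generalize (∏ j ∈ Finset.range k, qF p M j) = Q at *
    have hsingle := single_iff p hp M hM k
    constructor
    · rintro ⟨a, ha, he⟩
      obtain ⟨S, hS, hSe⟩ := (ih _).mp ⟨a, ha, fun n => rfl⟩
      obtain ⟨R, hR, hRe⟩ := (hsingle _).mp ⟨a k, ha k, fun n => rfl⟩
      refine ⟨S * qF p M k + R * Q, ?_, ?_⟩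
      · refine (Polynomial.degree_add_le _ _).trans_lt (max_lt ?_ ?_)
        · rw [Polynomial.degree_mul, hF, hcast]
          exact WithBot.add_lt_add_right (by simp) hS
        · rw [Polynomial.degree_mul, hQ, hcast, add_comm]
          exact WithBot.add_lt_add_left (WithBot.coe_ne_bot (a := M * k)) hR
      · have : PowerSeries.mk e = PowerSeries.mk
            (fun n => ∑ j ∈ Finset.range k, a j n * (p : ℚ) ^ (j * n)) +
            PowerSeries.mk (fun n => a k n * (p : ℚ) ^ (k * n)) := by
          ext n
          simp [he, Finset.sum_range_succ]
        rw [this, Polynomial.coe_add, Polynomial.coe_mul, Polynomial.coe_mul, Polynomial.coe_mul,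
          ← hSe, ← hRe]
        ring
    · rintro ⟨P, hP, hPe⟩
      have hp0 : (p : ℚ) ≠ 0 := by exact_mod_cast hp.ne_zero
      obtain ⟨u, v, huv⟩ := hcop
      obtain ⟨R, S, hR, hPRS⟩ : ∃ R S : Polynomial ℚ, R.degree < (M : ℕ) ∧
          P = Q * R + qF p M k * S := by
        refine ⟨(u * P) %ₘ qF p M k, v * P + (u * P) /ₘ qF p M k * Q, ?_, ?_⟩
        · rw [← hF]; exact Polynomial.degree_modByMonic_lt _ hFm
        · have h1 := Polynomial.modByMonic_add_div (u * P) (qF p M k)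
          linear_combination (-P) * huv - Q * h1
      have hS : S.degree < (M * k : ℕ) := by
        have h1 : (S * qF p M k).degree < (M * (k + 1) : ℕ) := by
          have : S * qF p M k = P - R * Q := by rw [hPRS]; ring
          rw [this]
          refine (Polynomial.degree_sub_le _ _).trans_lt (max_lt hP ?_)
          rw [Polynomial.degree_mul, hQ, hcast, add_comm]
          exact WithBot.add_lt_add_left (WithBot.coe_ne_bot (a := M * k)) hR
        rw [Polynomial.degree_mul, hF, hcast] at h1
        exact lt_of_add_lt_add_right h1
      have hF0 : PowerSeries.constantCoeff (qF p M k : PowerSeries ℚ) ≠ 0 := by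
        have hM0 : M ≠ 0 := by omega
        simp [qF, zero_pow hM0, hp0]
      set F : PowerSeries ℚ := (qF p M k : PowerSeries ℚ) with hFdef
      set f : ℕ → ℚ := fun n => PowerSeries.coeff n (F⁻¹ * (R : PowerSeries ℚ)) with hf
      have hmk : PowerSeries.mk f = F⁻¹ * (R : PowerSeries ℚ) := by
        ext n; simp [hf]
      have hfR : F * PowerSeries.mk f = (R : PowerSeries ℚ) := by
        rw [hmk, ← mul_assoc, PowerSeries.mul_inv_cancel _ hF0, one_mul]
      have hFne : F ≠ 0 := by
        intro h; rw [h] at hF0; simp at hF0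
      obtain ⟨b, hb, hfb⟩ := (hsingle f).mpr ⟨R, hR, hfR⟩
      obtain ⟨a, ha, hga⟩ := (ih (fun n => e n - f n)).mpr ⟨S, hS, by
        have : PowerSeries.mk (fun n => e n - f n) = PowerSeries.mk e - PowerSeries.mk f := by
          ext n; simp
        rw [this]
        apply mul_left_cancel₀ hFne
        rw [hPRS, Polynomial.coe_add, Polynomial.coe_mul, Polynomial.coe_mul,
          Polynomial.coe_mul] at hPe
        linear_combination hPe - (Q : PowerSeries ℚ) * hfR⟩
      refine ⟨fun j => if j = k then b else a j, fun j n => ?_, fun n => ?_⟩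
      · dsimp only
        split_ifs
        · exact hb n
        · exact ha j n
      · rw [Finset.sum_range_succ, Finset.sum_congr rfl (g := fun j => a j n * (p : ℚ) ^ (j * n))]
        · have h1 := hga n
          have h2 := hfb n
          simp only [if_true]
          linarith
        · intro j hj
          have := (Finset.mem_range.mp hj).ne
          simp [this]


/-- **Theorem 2.7.** Let `p` be a prime, `d ∈ ℕ`, `M ≥ 1` and `e : ℕ → ℚ`.  Then
`eₙ = a_d(n) p^{dn} + ⋯ + a₀(n)` with each `a_j : ℕ → ℚ` periodic of period `M`
if and only if `Q · G(e;z) = P` in `ℚ⟦z⟧`, where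
`Q = ∏_{j=0}^d (z^M - 1/p^{jM})` and `deg P < M(d + 1)`. -/
theorem quasiPolynomial_in_p_pow_iff_genSeries (p : ℕ) (hp : p.Prime) (d M : ℕ)
    (hM : 1 ≤ M) (e : ℕ → ℚ) :
    (∃ a : Fin (d + 1) → ℕ → ℚ, (∀ j, ∀ n : ℕ, a j (n + M) = a j n) ∧
      ∀ n : ℕ, e n = ∑ j, a j n * (p : ℚ) ^ ((j : ℕ) * n)) ↔
    (∃ P : Polynomial ℚ, P.degree < (M * (d + 1) : ℕ) ∧
      ((∏ j ∈ Finset.range (d + 1),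
          (Polynomial.X ^ M - Polynomial.C ((1 : ℚ) / (p : ℚ) ^ (j * M))) : Polynomial ℚ) :
          PowerSeries ℚ) * PowerSeries.mk e = (P : PowerSeries ℚ)) := by
  refine Iff.trans ?_ (main_aux p hp M hM (d + 1) e)
  constructor
  · rintro ⟨a, ha, he⟩
    refine ⟨fun j n => if h : j < d + 1 then a ⟨j, h⟩ n else 0, fun j n => ?_, fun n => ?_⟩
    · dsimp only
      split_ifs
      · exact ha _ n
      · rfl
    · rw [he, Finset.sum_range]
      refine Finset.sum_congr rfl fun j _ => ?_
      dsimp only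
      rw [dif_pos j.isLt]
  · rintro ⟨a, ha, he⟩
    refine ⟨fun j => a j, fun j n => ha j n, fun n => ?_⟩
    rw [he, Finset.sum_range]
end

section
/- Let p be a prime, let ℓ ≤ d be natural numbers, let a_ℓ,…,a_d ∈ ℚ be nonzero, let α be a real number with α < ℓ, and let e : ℕ → ℚ satisfy e_n = a_d p^{dn} + a_{d−1} p^{(d−1)n} + ⋯ + a_ℓ p^{ℓn} + f_n, where there is a constant C > 0 with |f_n| ≤ C·p^{αn} for all n ∈ ℕ. Then there exists a function g : ℂ → ℂ which is differentiable (holomorphic) on the open ball {z ∈ ℂ : |z| < p^{−α}} such that for every z ∈ ℂ with |z| < p^{−d} one has ∑_{n≥0} e_n z^n = ∑_{i=ℓ}^d (−a_i p^{−i})/(z − p^{−i}) + g(z). In particular, for each ℓ ≤ i ≤ d, the residue of the meromorphic function ∑ e_n z^n at z = 1/p^i equals −a_i p^{−i}. -/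
/-- **Corollary 2.9.** Let `p` be a prime, `ℓ ≤ d`, `a_ℓ, …, a_d ∈ ℚ` nonzero, `α < ℓ`
real, and `e : ℕ → ℚ` with `eₙ = ∑_{i=ℓ}^d aᵢ p^{in} + fₙ` where `|fₙ| ≤ C·p^{αn}`.
Then there is a function `g` holomorphic on the ball `‖z‖ < p^{-α}` such that for all
`z` with `‖z‖ < p^{-d}` one has
`∑ eₙ zⁿ = ∑_{i=ℓ}^d (-aᵢ p^{-i})/(z - p^{-i}) + g(z)`;  in particular the residue
of `∑ eₙ zⁿ` at `z = 1/pⁱ` equals `-aᵢ p^{-i}` for `ℓ ≤ i ≤ d`. -/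
theorem genSeries_partial_fraction_decomposition (p : ℕ) (hp : p.Prime) (ℓ d : ℕ)
    (hld : ℓ ≤ d) (α : ℝ) (hα : α < (ℓ : ℝ)) (a : ℕ → ℚ)
    (ha : ∀ i, ℓ ≤ i → i ≤ d → a i ≠ 0) (f : ℕ → ℚ) (C : ℝ) (hC : 0 < C)
    (hf : ∀ n : ℕ, |(f n : ℝ)| ≤ C * (p : ℝ) ^ (α * n)) (e : ℕ → ℚ)
    (he : ∀ n : ℕ, e n = ∑ i ∈ Finset.Icc ℓ d, a i * (p : ℚ) ^ (i * n) + f n) :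
    ∃ g : ℂ → ℂ, DifferentiableOn ℂ g (Metric.ball 0 ((p : ℝ) ^ (-α))) ∧
      ∀ z : ℂ, ‖z‖ < (p : ℝ) ^ (-(d : ℝ)) →
        ∑' n : ℕ, (e n : ℂ) * z ^ n =
          ∑ i ∈ Finset.Icc ℓ d,
            (-(a i : ℂ) * ((p : ℂ) ^ i)⁻¹) / (z - ((p : ℂ) ^ i)⁻¹) + g z := by
  have hp1 : (1 : ℝ) < p := by exact_mod_cast hp.one_lt
  have hp0 : (0 : ℝ) < p := by linarith
  have hpc : (p : ℂ) ≠ 0 := by exact_mod_cast hp.ne_zero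
  have hbound : ∀ (r : ℝ) (w : ℂ), ‖w‖ ≤ r → ∀ n : ℕ,
      ‖(f n : ℂ) * w ^ n‖ ≤ C * ((p : ℝ) ^ α * r) ^ n := by
    intro r w hw n
    have h1 : ‖(f n : ℂ)‖ = |(f n : ℝ)| := by
      have h : (f n : ℂ) = ((f n : ℝ) : ℂ) := by push_cast; rfl
      rw [h, Complex.norm_real, Real.norm_eq_abs]
    rw [norm_mul, norm_pow, h1, mul_pow, ← Real.rpow_natCast ((p : ℝ) ^ α) n,
      ← Real.rpow_mul hp0.le, ← mul_assoc]
    have h2 := hf n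
    gcongr
  have hsum : ∀ r : ℝ, 0 ≤ r → r < (p : ℝ) ^ (-α) →
      Summable (fun n : ℕ => C * ((p : ℝ) ^ α * r) ^ n) := by
    intro r hr0 hr
    apply Summable.mul_left
    apply summable_geometric_of_lt_one (by positivity)
    rw [Real.rpow_neg hp0.le] at hr
    have h3 : (0 : ℝ) < (p : ℝ) ^ α := by positivity
    calc (p : ℝ) ^ α * r < (p : ℝ) ^ α * ((p : ℝ) ^ α)⁻¹ := by gcongr
      _ = 1 := mul_inv_cancel₀ h3.ne'
  refine ⟨fun z => ∑' n : ℕ, (f n : ℂ) * z ^ n, ?_, ?_⟩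
  · intro z hz
    rw [mem_ball_zero_iff] at hz
    obtain ⟨r, hzr, hr⟩ := exists_between hz
    have hd : DifferentiableOn ℂ (fun z : ℂ => ∑' n : ℕ, (f n : ℂ) * z ^ n)
        (Metric.ball 0 r) := by
      refine Complex.differentiableOn_tsum_of_summable_norm
        (hsum r ((norm_nonneg z).trans hzr.le) hr) ?_ Metric.isOpen_ball ?_
      · intro n
        fun_prop
      · intro n w hw
        rw [mem_ball_zero_iff] at hw
        exact hbound r w hw.le n
    exact (hd.differentiableAt
      (Metric.isOpen_ball.mem_nhds (mem_ball_zero_iff.2 hzr))).differentiableWithinAt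
  · intro z hz
    have hzα : ‖z‖ < (p : ℝ) ^ (-α) := by
      refine hz.trans_le (Real.rpow_le_rpow_of_exponent_le hp1.le ?_)
      have : (ℓ : ℝ) ≤ d := by exact_mod_cast hld
      linarith
    have hfs : Summable (fun n : ℕ => (f n : ℂ) * z ^ n) :=
      Summable.of_norm_bounded (hsum ‖z‖ (norm_nonneg z) hzα) (hbound ‖z‖ z le_rfl)
    have hgeo : ∀ i ∈ Finset.Icc ℓ d,
        HasSum (fun n : ℕ => (a i : ℂ) * ((p : ℂ) ^ i * z) ^ n)
          ((-(a i : ℂ) * ((p : ℂ) ^ i)⁻¹) / (z - ((p : ℂ) ^ i)⁻¹)) := by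
      intro i hi
      have hq : ((p : ℂ) ^ i) ≠ 0 := pow_ne_zero _ hpc
      have hlt : ‖(p : ℂ) ^ i * z‖ < 1 := by
        rw [norm_mul, norm_pow, Complex.norm_natCast]
        rw [Real.rpow_neg hp0.le, Real.rpow_natCast] at hz
        have hpd : (0 : ℝ) < (p : ℝ) ^ d := by positivity
        calc (p : ℝ) ^ i * ‖z‖ ≤ (p : ℝ) ^ d * ‖z‖ := by
              gcongr
              · exact hp1.le
              · exact (Finset.mem_Icc.1 hi).2
          _ < (p : ℝ) ^ d * ((p : ℝ) ^ d)⁻¹ := by gcongr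
          _ = 1 := mul_inv_cancel₀ hpd.ne'
      have hne : 1 - (p : ℂ) ^ i * z ≠ 0 := by
        intro h
        rw [← sub_eq_zero.1 h] at hlt
        simp at hlt
      have hne2 : z - ((p : ℂ) ^ i)⁻¹ ≠ 0 := by
        intro h
        apply hne
        rw [sub_eq_zero.1 h, mul_inv_cancel₀ hq, sub_self]
      have heq : (-(a i : ℂ) * ((p : ℂ) ^ i)⁻¹) / (z - ((p : ℂ) ^ i)⁻¹)
          = (a i : ℂ) * (1 - (p : ℂ) ^ i * z)⁻¹ := by
        rw [div_eq_iff hne2, mul_assoc, eq_comm, neg_mul, ← mul_neg]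
        congr 1
        rw [inv_mul_eq_iff_eq_mul₀ hne]
        linear_combination (-z) * mul_inv_cancel₀ hq
      rw [heq]
      exact (hasSum_geometric_of_norm_lt_one hlt).mul_left _
    have htot := (hasSum_sum hgeo).add hfs.hasSum
    rw [← htot.tsum_eq]
    congr 1
    funext n
    rw [he n]
    push_cast
    rw [add_mul, Finset.sum_mul]
    congr 1
    refine Finset.sum_congr rfl fun i _ => ?_
    rw [mul_pow, pow_mul, mul_assoc]
end
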